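/- Let M be a left 𝕆-module and x ∈ M a nonzero element. Then the following are equivalent: (i) x is cyclic; (ii) dim_ℝ ⟨x⟩_𝕆 = 8; (iii) ⟨x⟩_𝕆 is isomorphic as a left 𝕆-module to 𝕆 or to 𝕆̄. Moreover, for any left 𝕆-module M, M is the real linear span of its cyclic elements: M = Span_ℝ 𝒞(M). -/

import Mathlib

noncomputable section

open scoped Quaternion

/-- The octonions, realized as pairs of quaternions via the Cayley–Dickson construction. -/
def Octo : Type := ℍ[ℝ] × ℍ[ℝ]

namespace Octo

instance : AddCommGroup Octo := inferInstanceAs (AddCommGroup (ℍ[ℝ] × ℍ[ℝ]))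
instance : Module ℝ Octo := inferInstanceAs (Module ℝ (ℍ[ℝ] × ℍ[ℝ]))

/-- Build an octonion from a pair of quaternions. -/
def mk (a b : ℍ[ℝ]) : Octo := (a, b)

/-- First quaternion component. -/
def p1 (x : Octo) : ℍ[ℝ] := (show ℍ[ℝ] × ℍ[ℝ] from x).1

/-- Second quaternion component. -/
def p2 (x : Octo) : ℍ[ℝ] := (show ℍ[ℝ] × ℍ[ℝ] from x).2

/-- Cayley–Dickson multiplication: `(a,b)(c,d) = (ac − d̄b, da + bc̄)`. -/
instance : Mul Octo :=
  ⟨fun x y => mk (p1 x * p1 y - star (p2 y) * p2 x) (p2 y * p1 x + p2 x * star (p1 y))⟩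

instance : One Octo := ⟨mk 1 0⟩

/-- Octonion conjugation: for `x = (a,b)`, `x̄ = (ā, −b)`. -/
def conj (x : Octo) : Octo := mk (star (p1 x)) (-(p2 x))

/-- The octonion associator `[x,y,z] = (xy)z − x(yz)`. -/
def assoc (x y z : Octo) : Octo := x * y * z - x * (y * z)

/-- The octonion commutator `[x,y] = xy − yx`. -/
def comm (x y : Octo) : Octo := x * y - y * x

/-- The canonical embedding of the reals into the octonions. -/
def ofReal (r : ℝ) : Octo := r • (1 : Octo)

end Octo

section OMod

variable {M : Type*} [AddCommGroup M] [Module ℝ M]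
variable {N : Type*} [AddCommGroup N] [Module ℝ N]

/-- `IsOMod sm` says that the scalar multiplication `sm : 𝕆 × M → M` makes the real vector
space `M` a left 𝕆-module: `sm` is ℝ-bilinear, unital, and the left associator is
alternating in its two octonion arguments. -/
structure IsOMod (sm : Octo → M → M) : Prop where
  smul_add : ∀ (p : Octo) (m n : M), sm p (m + n) = sm p m + sm p n
  add_smul : ∀ (p q : Octo) (m : M), sm (p + q) m = sm p m + sm q m
  real_smul : ∀ (r : ℝ) (p : Octo) (m : M), sm (r • p) m = r • sm p m
  smul_real : ∀ (r : ℝ) (p : Octo) (m : M), sm p (r • m) = r • sm p m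
  one_smul : ∀ m : M, sm 1 m = m
  alt : ∀ (p q : Octo) (m : M),
    sm (p * q) m - sm p (sm q m) = -(sm (q * p) m - sm q (sm p m))

/-- The left associator `[p,q,m] = (pq)m − p(qm)`. -/
def oLassoc (sm : Octo → M → M) (p q : Octo) (m : M) : M :=
  sm (p * q) m - sm p (sm q m)

/-- The set `𝒜(M)` of associative elements: `[p,q,m] = 0` for all `p,q ∈ 𝕆`. -/
def assocSet (sm : Octo → M → M) : Set M :=
  {m | ∀ p q : Octo, oLassoc sm p q m = 0}

/-- The set `𝒜⁻(M)` of conjugate associative elements: `(pq)m = q(pm)` for all `p,q ∈ 𝕆`. -/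
def conjAssocSet (sm : Octo → M → M) : Set M :=
  {m | ∀ p q : Octo, sm (p * q) m = sm q (sm p m)}

/-- A homomorphism of left 𝕆-modules: an ℝ-linear map commuting with 𝕆-scalar
multiplication. -/
def IsOHom (sm : Octo → M → M) (sm' : Octo → N → N) (f : M → N) : Prop :=
  IsLinearMap ℝ f ∧ ∀ (p : Octo) (m : M), f (sm p m) = sm' p (f m)

/-- Two left 𝕆-modules are isomorphic if there is a bijective homomorphism between them. -/
def OIso (sm : Octo → M → M) (sm' : Octo → N → N) : Prop :=
  ∃ f : M → N, IsOHom sm sm' f ∧ Function.Bijective f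

/-- A submodule: a real subspace closed under 𝕆-scalar multiplication. -/
structure IsOSubmodule (sm : Octo → M → M) (S : Set M) : Prop where
  zero_mem : (0 : M) ∈ S
  add_mem : ∀ {x y : M}, x ∈ S → y ∈ S → x + y ∈ S
  smul_mem : ∀ (r : ℝ) {x : M}, x ∈ S → r • x ∈ S
  osmul_mem : ∀ (p : Octo) {x : M}, x ∈ S → sm p x ∈ S

/-- `⟨m⟩_𝕆`, the smallest submodule containing `m`, as a set. -/
def genSet (sm : Octo → M → M) (m : M) : Set M :=
  ⋂₀ {S : Set M | IsOSubmodule sm S ∧ m ∈ S}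

/-- An element `m` is cyclic if `⟨m⟩_𝕆 = 𝕆m`. -/
def IsOCyclic (sm : Octo → M → M) (m : M) : Prop :=
  genSet sm m = {x | ∃ p : Octo, x = sm p m}

/-- 𝕆-linear independence of a subset `S ⊆ M`: any finite 𝕆-linear combination of
distinct elements of `S` that vanishes has all coefficients zero. -/
def OLinIndep (sm : Octo → M → M) (S : Set M) : Prop :=
  ∀ (n : ℕ) (s : Fin n → M) (r : Fin n → Octo), Function.Injective s → (∀ i, s i ∈ S) →
    (∑ i, sm (r i) (s i)) = 0 → ∀ i, r i = 0

end OMod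

/-- The canonical left 𝕆-module structure on 𝕆 itself. -/
def oSmul : Octo → Octo → Octo := fun p x => p * x

/-- The left 𝕆-module structure `𝕆̄` on 𝕆: `p ·̂ x = p̄x`. -/
def oBarSmul : Octo → Octo → Octo := fun p x => Octo.conj p * x

/-- `⟨m⟩_𝕆` as a real subspace of `M`. -/
def genSubmodule {M : Type*} [AddCommGroup M] [Module ℝ M]
    (sm : Octo → M → M) (m : M) : Submodule ℝ M where
  carrier := genSet sm m
  zero_mem' := Set.mem_sInter.mpr fun _ hS => hS.1.zero_mem
  add_mem' := fun ha hb => Set.mem_sInter.mpr fun S hS =>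
    hS.1.add_mem (Set.mem_sInter.mp ha S hS) (Set.mem_sInter.mp hb S hS)
  smul_mem' := fun r _ hx => Set.mem_sInter.mpr fun S hS =>
    hS.1.smul_mem r (Set.mem_sInter.mp hx S hS)

/-- The induced 𝕆-scalar multiplication on `⟨m⟩_𝕆`. -/
def genSmul {M : Type*} [AddCommGroup M] [Module ℝ M]
    (sm : Octo → M → M) (m : M) :
    Octo → genSubmodule sm m → genSubmodule sm m :=
  fun p y => ⟨sm p y.1, Set.mem_sInter.mpr fun S hS =>
    hS.1.osmul_mem p (Set.mem_sInter.mp y.2 S hS)⟩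

/-!
Left multiplications by the seven imaginary units `e₀, …, e₆` anticommute and square to `-1`, so
the monomials in them commute or anticommute. The monomials of four lines of the Fano plane,
`e₀e₁e₂`, `e₀e₃e₄`, `e₁e₃e₅`, `e₂e₃e₆`, are commuting involutions, and some `eₗ` flips the sign of
any one of the first three on an eigenvector without disturbing the others. Hence modulo
`𝕆`-multiples every element may be assumed to be a `-1`-eigenvector of the first three involutions.
On the `-1`-eigenspace of the fourth one such an element is associative; on the `+1`-eigenspace its
multiple by `e₆` is conjugate associative. So `M` is spanned by the spaces `𝕆a` with `a`
associative or conjugate associative. These are submodules of dimension at most `8`, whereas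
`p ↦ px` is injective for `x ≠ 0`; the theorem follows by counting dimensions.
-/

namespace Octo

@[simp] theorem p1_mk (a b : ℍ[ℝ]) : p1 (mk a b) = a := rfl
@[simp] theorem p2_mk (a b : ℍ[ℝ]) : p2 (mk a b) = b := rfl
@[simp] theorem p1_zero : p1 0 = 0 := rfl
@[simp] theorem p2_zero : p2 0 = 0 := rfl
@[simp] theorem p1_one : p1 1 = 1 := rfl
@[simp] theorem p2_one : p2 1 = 0 := rfl
@[simp] theorem p1_add (x y : Octo) : p1 (x + y) = p1 x + p1 y := rfl
@[simp] theorem p2_add (x y : Octo) : p2 (x + y) = p2 x + p2 y := rfl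
@[simp] theorem p1_neg (x : Octo) : p1 (-x) = -p1 x := rfl
@[simp] theorem p2_neg (x : Octo) : p2 (-x) = -p2 x := rfl
@[simp] theorem p1_sub (x y : Octo) : p1 (x - y) = p1 x - p1 y := rfl
@[simp] theorem p2_sub (x y : Octo) : p2 (x - y) = p2 x - p2 y := rfl
@[simp] theorem p1_smul (r : ℝ) (x : Octo) : p1 (r • x) = r • p1 x := rfl
@[simp] theorem p2_smul (r : ℝ) (x : Octo) : p2 (r • x) = r • p2 x := rfl
@[simp] theorem p1_mul (x y : Octo) : p1 (x * y) = p1 x * p1 y - star (p2 y) * p2 x := rfl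
@[simp] theorem p2_mul (x y : Octo) : p2 (x * y) = p2 y * p1 x + p2 x * star (p1 y) := rfl
@[simp] theorem p1_conj (x : Octo) : p1 (conj x) = star (p1 x) := rfl
@[simp] theorem p2_conj (x : Octo) : p2 (conj x) = -p2 x := rfl

@[ext] theorem ext {x y : Octo} (h₁ : p1 x = p1 y) (h₂ : p2 x = p2 y) : x = y := Prod.ext h₁ h₂

instance : NonAssocRing Octo where
  left_distrib x y z := by ext1 <;> simp only [p1_mul, p2_mul, p1_add, p2_add, star_add] <;>
    noncomm_ring
  right_distrib x y z := by ext1 <;> simp only [p1_mul, p2_mul, p1_add, p2_add] <;> noncomm_ring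
  zero_mul x := by ext1 <;> simp
  mul_zero x := by ext1 <;> simp
  one_mul x := by ext1 <;> simp
  mul_one x := by ext1 <;> simp

instance : IsScalarTower ℝ Octo Octo :=
  ⟨fun r x y => show r • x * y = r • (x * y) by ext1 <;> simp [smul_sub]⟩

instance : SMulCommClass ℝ Octo Octo :=
  ⟨fun r x y => show r • (x * y) = x * r • y by ext1 <;> simp [smul_sub]⟩

instance : Module.Finite ℝ Octo := inferInstanceAs (Module.Finite ℝ (ℍ[ℝ] × ℍ[ℝ]))

theorem finrank_eq_eight : Module.finrank ℝ Octo = 8 := by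
  change Module.finrank ℝ (ℍ[ℝ] × ℍ[ℝ]) = 8
  rw [Module.finrank_prod, Quaternion.finrank_eq_four]

theorem conj_add (x y : Octo) : conj (x + y) = conj x + conj y := by
  ext1
  · simp
  · simp [add_comm]

theorem conj_smul (r : ℝ) (x : Octo) : conj (r • x) = r • conj x := by ext1 <;> simp

theorem conj_one : conj 1 = 1 := by ext1 <;> simp

theorem conj_conj (x : Octo) : conj (conj x) = x := by ext1 <;> simp

theorem conj_mul (x y : Octo) : conj (x * y) = conj y * conj x := by
  ext1 <;> simp

theorem conj_eq_two_re_sub (x : Octo) : conj x = (2 * (p1 x).re) • (1 : Octo) - x := by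
  ext1
  · rw [p1_conj, Quaternion.star_eq_two_re_sub]
    simp [Algebra.smul_def]
  · simp

/-- The squared Euclidean norm of an octonion. -/
def normSq (x : Octo) : ℝ := Quaternion.normSq (p1 x) + Quaternion.normSq (p2 x)

theorem normSq_ne_zero {x : Octo} (hx : x ≠ 0) : normSq x ≠ 0 := by
  contrapose! hx
  obtain ⟨h₁, h₂⟩ := (add_eq_zero_iff_of_nonneg Quaternion.normSq_nonneg
    Quaternion.normSq_nonneg).mp hx
  exact ext (Quaternion.normSq_eq_zero.mp h₁) (Quaternion.normSq_eq_zero.mp h₂)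

theorem conj_mul_self (x : Octo) : conj x * x = normSq x • (1 : Octo) := by
  ext1
  · simp [normSq, Quaternion.star_mul_self, Algebra.smul_def]
  · simp

/-- The purely imaginary octonion with coordinate vector `v` in the basis
`i, j, k, ℓ, iℓ, jℓ, kℓ`, where `ℓ = (0, 1)` and hence `(a, b) = a + bℓ`. -/
def ofIm (v : Fin 7 → ℝ) : Octo := mk ⟨0, v 0, v 1, v 2⟩ ⟨v 3, v 4, v 5, v 6⟩

@[simp] theorem re_p1_ofIm (v : Fin 7 → ℝ) : (p1 (ofIm v)).re = 0 := rfl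
@[simp] theorem imI_p1_ofIm (v : Fin 7 → ℝ) : (p1 (ofIm v)).imI = v 0 := rfl
@[simp] theorem imJ_p1_ofIm (v : Fin 7 → ℝ) : (p1 (ofIm v)).imJ = v 1 := rfl
@[simp] theorem imK_p1_ofIm (v : Fin 7 → ℝ) : (p1 (ofIm v)).imK = v 2 := rfl
@[simp] theorem re_p2_ofIm (v : Fin 7 → ℝ) : (p2 (ofIm v)).re = v 3 := rfl
@[simp] theorem imI_p2_ofIm (v : Fin 7 → ℝ) : (p2 (ofIm v)).imI = v 4 := rfl
@[simp] theorem imJ_p2_ofIm (v : Fin 7 → ℝ) : (p2 (ofIm v)).imJ = v 5 := rfl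
@[simp] theorem imK_p2_ofIm (v : Fin 7 → ℝ) : (p2 (ofIm v)).imK = v 6 := rfl

theorem conj_ofIm (v : Fin 7 → ℝ) : conj (ofIm v) = -ofIm v := by ext <;> simp

theorem re_ofIm_mul_ofIm (v w : Fin 7 → ℝ) : (p1 (ofIm v * ofIm w)).re = -(v ⬝ᵥ w) := by
  simp [dotProduct, Fin.sum_univ_succ]
  ring

theorem ofIm_mul_ofIm_add (v w : Fin 7 → ℝ) :
    ofIm v * ofIm w + ofIm w * ofIm v = (-2 * (v ⬝ᵥ w)) • (1 : Octo) := by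
  have h : conj (ofIm v * ofIm w) = ofIm w * ofIm v := by
    rw [conj_mul, conj_ofIm, conj_ofIm, neg_mul_neg]
  rw [← h, conj_eq_two_re_sub, re_ofIm_mul_ofIm, add_sub_cancel, mul_neg, neg_mul]

/-- The imaginary units `i, j, k, ℓ, iℓ, jℓ, kℓ` of `𝕆`. -/
def imUnit (l : Fin 7) : Octo := ofIm (Pi.single l 1)

theorem conj_imUnit (l : Fin 7) : conj (imUnit l) = -imUnit l := conj_ofIm _

theorem imUnit_mul_self (l : Fin 7) : imUnit l * imUnit l = -1 := by
  have h : conj (imUnit l) * imUnit l = 1 := by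
    rw [conj_mul_self]
    fin_cases l <;> simp [normSq, Quaternion.normSq_def', imUnit]
  rwa [conj_imUnit, neg_mul, neg_eq_iff_eq_neg] at h

theorem imUnit_mul_add_eq_zero {l m : Fin 7} (hlm : l ≠ m) :
    imUnit l * imUnit m + imUnit m * imUnit l = 0 := by
  simp [imUnit, ofIm_mul_ofIm_add, hlm]

/-- The inclusion `q ↦ (q, 0)` of the quaternions. -/
def ofQuat : ℍ[ℝ] →ₗ[ℝ] Octo where
  toFun q := mk q 0
  map_add' p q := by ext1 <;> simp
  map_smul' r q := by ext1 <;> simp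

/-- The Cayley–Dickson unit `ℓ = (0, 1)`. -/
def ell : Octo := mk 0 1

@[simp] theorem p1_ofQuat (q : ℍ[ℝ]) : p1 (ofQuat q) = q := rfl
@[simp] theorem p2_ofQuat (q : ℍ[ℝ]) : p2 (ofQuat q) = 0 := rfl
@[simp] theorem p1_ell : p1 ell = 0 := rfl
@[simp] theorem p2_ell : p2 ell = 1 := rfl

theorem eq_ofQuat_add_ofQuat_mul_ell (x : Octo) :
    x = ofQuat (p1 x) + ofQuat (p2 x) * ell := by
  ext1 <;> simp

theorem ofQuat_mul (p q : ℍ[ℝ]) : ofQuat (p * q) = ofQuat p * ofQuat q := by ext1 <;> simp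

theorem ofQuat_star (q : ℍ[ℝ]) : ofQuat (star q) = (2 * q.re) • (1 : Octo) - ofQuat q := by
  have hconj : ofQuat (star q) = conj (ofQuat q) := by ext1 <;> simp
  rw [hconj, conj_eq_two_re_sub, p1_ofQuat]

theorem ell_mul_ell : ell * ell = -1 := by ext1 <;> simp

theorem ell_mul_ofQuat (q : ℍ[ℝ]) : ell * ofQuat q = ofQuat (star q) * ell := by ext1 <;> simp

theorem ofQuat_mul_ofQuat_mul_ell (p q : ℍ[ℝ]) :
    ofQuat p * (ofQuat q * ell) = ofQuat (q * p) * ell := by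
  ext1 <;> simp

theorem ofQuat_mul_ell_mul_ofQuat (p q : ℍ[ℝ]) :
    ofQuat p * ell * ofQuat q = ofQuat (p * star q) * ell := by
  ext1 <;> simp

theorem ofQuat_mul_ell_mul_ell (p : ℍ[ℝ]) : ofQuat p * ell * ell = -ofQuat p := by
  ext1 <;> simp

theorem ell_mul_ofQuat_mul_ell (q : ℍ[ℝ]) : ell * (ofQuat q * ell) = -ofQuat (star q) := by
  ext1 <;> simp

theorem ofQuat_mul_ell_mul_ofQuat_mul_ell (p q : ℍ[ℝ]) :
    ofQuat p * ell * (ofQuat q * ell) = -ofQuat (star q * p) := by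
  ext1 <;> simp

theorem imUnit_three : imUnit 3 = ell := by ext <;> simp [imUnit]

theorem ofQuat_eq_sum_imUnit (q : ℍ[ℝ]) :
    ofQuat q = q.re • (1 : Octo) + q.imI • imUnit 0 + q.imJ • imUnit 1 + q.imK • imUnit 2 := by
  ext <;> simp [imUnit]

theorem imUnit_zero_mul_one : imUnit 0 * imUnit 1 = imUnit 2 := by ext <;> simp [imUnit]

theorem imUnit_one_mul_two : imUnit 1 * imUnit 2 = imUnit 0 := by ext <;> simp [imUnit]

theorem imUnit_two_mul_zero : imUnit 2 * imUnit 0 = imUnit 1 := by ext <;> simp [imUnit]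

theorem imUnit_zero_mul_three : imUnit 0 * imUnit 3 = imUnit 4 := by ext <;> simp [imUnit]

theorem imUnit_one_mul_three : imUnit 1 * imUnit 3 = imUnit 5 := by ext <;> simp [imUnit]

theorem imUnit_two_mul_three : imUnit 2 * imUnit 3 = imUnit 6 := by ext <;> simp [imUnit]

end Octo

/-- A family of pairwise anticommuting square roots of `-1`, i.e. a family of generators satisfying
the relations of a negative definite Clifford algebra. -/
structure IsCliffordFamily {ι A : Type*} [Ring A] (J : ι → A) : Prop where
  mul_self : ∀ i, J i * J i = -1
  anticomm : ∀ ⦃i j⦄, i ≠ j → J i * J j = -(J j * J i)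

section commSign

variable {ι : Type*} [DecidableEq ι]

/-- The sign `ε` in `P v * P w = ε • (P w * P v)`, where `P u` is the monomial of the word `u` in
a family of generators of which distinct members anticommute. -/
def commSign (v w : List ι) : ℤˣ :=
  (v.map fun i => (w.map fun j => if i = j then 1 else -1).prod).prod

/-- The sign of the square of the monomial of a word in a Clifford family. -/
def sqSign : List ι → ℤˣ
  | [] => 1
  | i :: v => -commSign [i] v * sqSign v

end commSign

namespace IsCliffordFamily

variable {ι A : Type*} [DecidableEq ι] [Ring A] {J : ι → A}

theorem mul_eq_smul (hJ : IsCliffordFamily J) (i j : ι) :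
    J i * J j = (if i = j then 1 else -1 : ℤˣ) • (J j * J i) := by
  split_ifs with hij
  · rw [hij, one_smul]
  · rw [hJ.anticomm hij, Units.neg_smul, one_smul]

theorem mul_prod (hJ : IsCliffordFamily J) (i : ι) (w : List ι) :
    J i * (w.map J).prod = commSign [i] w • ((w.map J).prod * J i) := by
  induction w with
  | nil => simp [commSign]
  | cons j w ih =>
    have hsign : commSign [i] (j :: w) = (if i = j then 1 else -1) * commSign [i] w := by
      simp [commSign]
    rw [List.map_cons, List.prod_cons, ← mul_assoc, hJ.mul_eq_smul, smul_mul_assoc, mul_assoc, ih,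
      mul_smul_comm, smul_smul, hsign, mul_assoc]

theorem prod_mul_prod (hJ : IsCliffordFamily J) (v w : List ι) :
    (v.map J).prod * (w.map J).prod = commSign v w • ((w.map J).prod * (v.map J).prod) := by
  induction v with
  | nil => simp [commSign]
  | cons i v ih =>
    have hsign : commSign (i :: v) w = commSign v w * commSign [i] w := by
      simp [commSign, mul_comm]
    rw [List.map_cons, List.prod_cons, mul_assoc, ih, mul_smul_comm, ← mul_assoc, hJ.mul_prod,
      smul_mul_assoc, smul_smul, hsign, mul_assoc]

theorem commute_prod (hJ : IsCliffordFamily J) {v w : List ι} (h : commSign v w = 1) :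
    Commute (v.map J).prod (w.map J).prod := by
  rw [commute_iff_eq, hJ.prod_mul_prod, h, one_smul]

theorem prod_append_comm (hJ : IsCliffordFamily J) {v w : List ι} (h : commSign v w = 1) :
    ((v ++ w).map J).prod = ((w ++ v).map J).prod := by
  simp only [List.map_append, List.prod_append, (hJ.commute_prod h).eq]

theorem anticomm_prod (hJ : IsCliffordFamily J) {v w : List ι} (h : commSign v w = -1) :
    (v.map J).prod * (w.map J).prod = -((w.map J).prod * (v.map J).prod) := by
  rw [hJ.prod_mul_prod, h, Units.neg_smul, one_smul]

theorem prod_mul_self (hJ : IsCliffordFamily J) (v : List ι) :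
    (v.map J).prod * (v.map J).prod = sqSign v • (1 : A) := by
  induction v with
  | nil => simp [sqSign]
  | cons i v ih =>
    rw [List.map_cons, List.prod_cons]
    nth_rw 1 [hJ.mul_prod]
    rw [smul_mul_assoc, mul_assoc, ← mul_assoc (J i), hJ.mul_self, neg_one_mul, mul_neg, ih,
      sqSign, neg_mul, Units.neg_smul, mul_smul, smul_neg]

theorem prod_mul_self_eq_one (hJ : IsCliffordFamily J) {v : List ι} (h : sqSign v = 1) :
    (v.map J).prod * (v.map J).prod = 1 := by
  rw [hJ.prod_mul_self, h, one_smul]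

end IsCliffordFamily

section Involution

open Module.End

variable {R M : Type*} [CommRing R] [Invertible (2 : R)] [AddCommGroup M] [Module R M]
  {T U : Module.End R M} {K S : Submodule R M}

theorem le_of_inf_eigenspace_le (hT : T * T = 1) (hKT : K ∈ T.invtSubmodule)
    (hpos : K ⊓ eigenspace T 1 ≤ S) (hneg : K ⊓ eigenspace T (-1) ≤ S) : K ≤ S := by
  intro m hm
  have hTm : T m ∈ K := hKT hm
  have hTT : T (T m) = m := LinearMap.congr_fun hT m
  have hp : m + T m ∈ S := hpos ⟨add_mem hm hTm, by simp [hTT, add_comm]⟩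
  have hn : m - T m ∈ S := hneg ⟨sub_mem hm hTm, by simp [hTT]⟩
  have hsum : m = (⅟2 : R) • ((m + T m) + (m - T m)) := by
    rw [add_add_sub_cancel, ← two_smul R m, invOf_smul_smul]
  exact hsum ▸ S.smul_mem _ (add_mem hp hn)

theorem le_of_inf_eigenspace_neg_one_le (hT : T * T = 1) (hTU : T * U = -(U * T))
    (hKT : K ∈ T.invtSubmodule) (hKU : K ∈ U.invtSubmodule) (hSU : S.comap U ≤ S)
    (hneg : K ⊓ eigenspace T (-1) ≤ S) : K ≤ S := by
  refine le_of_inf_eigenspace_le hT hKT (fun m hm => hSU (hneg ⟨hKU hm.1, ?_⟩)) hneg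
  have hTUm : T (U m) = -U (T m) := LinearMap.congr_fun hTU m
  have hTm : T m = m := by simpa using hm.2
  simp [hTUm, hTm]

end Involution

section NegEigenspace

open Module.End

variable {ι R M : Type*} [CommRing R] [AddCommGroup M] [Module R M]

/-- The simultaneous `-1`-eigenspace of the monomials of the words in `L`. -/
def negEigenspace (J : ι → Module.End R M) (L : List (List ι)) : Submodule R M :=
  ⨅ v ∈ L, eigenspace (v.map J).prod (-1)

theorem mem_negEigenspace {J : ι → Module.End R M} {L : List (List ι)} {m : M} :
    m ∈ negEigenspace J L ↔ ∀ v ∈ L, (v.map J).prod m = -m := by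
  simp [negEigenspace, Submodule.mem_iInf]

namespace IsCliffordFamily

variable [DecidableEq ι] {J : ι → Module.End R M}

theorem negEigenspace_mem_invtSubmodule (hJ : IsCliffordFamily J) {L : List (List ι)} {w : List ι}
    (hw : ∀ v ∈ L, commSign v w = 1) : negEigenspace J L ∈ (w.map J).prod.invtSubmodule := by
  intro m hm
  refine mem_negEigenspace.mpr fun v hv => ?_
  have hcomm := LinearMap.congr_fun (hJ.commute_prod (hw v hv)).eq m
  rw [Module.End.mul_apply, Module.End.mul_apply, mem_negEigenspace.mp hm v hv, map_neg] at hcomm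
  exact hcomm

theorem negEigenspace_le_of_cons [Invertible (2 : R)] (hJ : IsCliffordFamily J)
    {L : List (List ι)} {v : List ι} {i : ι} {S : Submodule R M} (hS : S.comap (J i) ≤ S)
    (hv : sqSign v = 1) (hvi : commSign v [i] = -1)
    (hL : ∀ w ∈ L, commSign w v = 1 ∧ commSign w [i] = 1)
    (hcons : negEigenspace J (v :: L) ≤ S) : negEigenspace J L ≤ S := by
  refine le_of_inf_eigenspace_neg_one_le (T := (v.map J).prod) (U := J i) ?_ ?_ ?_ ?_ hS
    fun m hm => hcons ?_
  · exact hJ.prod_mul_self_eq_one hv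
  · simpa using hJ.anticomm_prod hvi
  · exact hJ.negEigenspace_mem_invtSubmodule fun w hw => (hL w hw).1
  · simpa using hJ.negEigenspace_mem_invtSubmodule fun w hw => (hL w hw).2
  · have hvm : (v.map J).prod m = -m := by simpa using hm.2
    exact mem_negEigenspace.mpr (List.forall_mem_cons.mpr ⟨hvm, mem_negEigenspace.mp hm.1⟩)

end IsCliffordFamily

end NegEigenspace

/-- The conjugate of a left `𝕆`-module structure, in which `p` acts as `p̄`. -/
def conjSmul {M : Type*} (sm : Octo → M → M) : Octo → M → M := fun p => sm (Octo.conj p)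

/-- The set `𝕆 · (𝒜(M) ∪ 𝒜⁻(M))` spanned over `ℝ`. -/
def assocSpan {M : Type*} [AddCommGroup M] [Module ℝ M] (sm : Octo → M → M) : Submodule ℝ M :=
  Submodule.span ℝ {m | ∃ p : Octo, ∃ a ∈ assocSet sm ∪ conjAssocSet sm, sm p a = m}

/-- Four lines of the Fano plane, each listed so that the product of the first two units is the
third. -/
def fanoLines : List (List (Fin 7)) := [[2, 3, 6], [1, 3, 5], [0, 3, 4], [0, 1, 2]]

theorem mem_conjAssocSet_iff {M : Type*} [AddCommGroup M] [Module ℝ M] {sm : Octo → M → M}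
    {a : M} : a ∈ conjAssocSet sm ↔ a ∈ assocSet (conjSmul sm) := by
  constructor
  · intro ha p q
    rw [oLassoc, conjSmul, conjSmul, conjSmul, Octo.conj_mul, ha, sub_self]
  · intro ha p q
    have hpq := sub_eq_zero.mp (ha (Octo.conj q) (Octo.conj p))
    rwa [conjSmul, conjSmul, conjSmul, Octo.conj_mul, Octo.conj_conj, Octo.conj_conj] at hpq

namespace IsOMod

open Octo Module.End

variable {M : Type*} [AddCommGroup M] [Module ℝ M] {sm : Octo → M → M}

/-- The scalar multiplication of a left `𝕆`-module as a real bilinear map. -/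
def lsmul (h : IsOMod sm) : Octo →ₗ[ℝ] Module.End ℝ M :=
  LinearMap.mk₂ ℝ sm h.add_smul h.real_smul h.smul_add h.smul_real

@[simp] theorem lsmul_apply (h : IsOMod sm) (p : Octo) (m : M) : h.lsmul p m = sm p m := rfl

protected theorem neg_smul (h : IsOMod sm) (p : Octo) (m : M) : sm (-p) m = -sm p m :=
  h.lsmul.map_neg₂ p m

protected theorem smul_neg (h : IsOMod sm) (p : Octo) (m : M) : sm p (-m) = -sm p m :=
  map_neg (h.lsmul p) m

protected theorem sub_smul (h : IsOMod sm) (p q : Octo) (m : M) :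
    sm (p - q) m = sm p m - sm q m :=
  h.lsmul.map_sub₂ p q m

theorem smul_smul_add (h : IsOMod sm) (p q : Octo) (m : M) :
    sm p (sm q m) + sm q (sm p m) = sm (p * q + q * p) m := by
  have halt := h.alt p q m
  rw [neg_sub, sub_eq_sub_iff_add_eq_add] at halt
  rw [h.add_smul, halt, add_comm]

/-- The associator `[p, q, a]` as a real bilinear map in `p` and `q`. -/
def associator (h : IsOMod sm) (a : M) : Octo →ₗ[ℝ] Octo →ₗ[ℝ] M :=
  (LinearMap.mul ℝ Octo).compr₂ (h.lsmul.flip a) - h.lsmul.compl₂ (h.lsmul.flip a)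

theorem associator_apply (h : IsOMod sm) (a : M) (p q : Octo) :
    h.associator a p q = sm (p * q) a - sm p (sm q a) := rfl

theorem associator_eq_zero_iff (h : IsOMod sm) {a : M} {p q : Octo} :
    h.associator a p q = 0 ↔ sm p (sm q a) = sm (p * q) a :=
  sub_eq_zero.trans eq_comm

theorem associator_swap (h : IsOMod sm) (a : M) (p q : Octo) :
    h.associator a p q = -h.associator a q p := h.alt p q a

theorem associator_self (h : IsOMod sm) (a : M) (p : Octo) : h.associator a p p = 0 := by
  have : IsAddTorsionFree M := .of_isTorsionFree ℝ M
  exact self_eq_neg.mp (h.associator_swap a p p)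

theorem associator_one_left (h : IsOMod sm) (a : M) (q : Octo) : h.associator a 1 q = 0 := by
  rw [associator_apply, one_mul, h.one_smul, sub_self]

theorem associator_one_right (h : IsOMod sm) (a : M) (p : Octo) : h.associator a p 1 = 0 := by
  rw [associator_apply, mul_one, h.one_smul, sub_self]

theorem smul_smul_self (h : IsOMod sm) (p : Octo) (m : M) : sm p (sm p m) = sm (p * p) m :=
  h.associator_eq_zero_iff.mp (h.associator_self m p)

theorem conj_smul_smul (h : IsOMod sm) (p : Octo) (m : M) :
    sm (conj p) (sm p m) = normSq p • m := by
  have hassoc : h.associator m (conj p) p = 0 := by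
    rw [conj_eq_two_re_sub, map_sub, map_smul, LinearMap.sub_apply, LinearMap.smul_apply,
      associator_one_left, associator_self, smul_zero, sub_zero]
  rw [h.associator_eq_zero_iff.mp hassoc, conj_mul_self, h.real_smul, h.one_smul]

theorem injective_smul_right (h : IsOMod sm) {x : M} (hx : x ≠ 0) :
    Function.Injective (h.lsmul.flip x) := by
  refine (injective_iff_map_eq_zero _).mpr fun p hp => ?_
  by_contra hp0
  have hpx : normSq p • x = 0 := by
    rw [← h.conj_smul_smul, show sm p x = 0 from hp]
    exact map_zero (h.lsmul (conj p))
  exact (smul_ne_zero (normSq_ne_zero hp0) hx) hpx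

/-- Left multiplication by the `l`-th imaginary unit. -/
def imSmul (h : IsOMod sm) (l : Fin 7) : Module.End ℝ M := h.lsmul (imUnit l)

theorem isCliffordFamily_imSmul (h : IsOMod sm) : IsCliffordFamily h.imSmul where
  mul_self l := by
    ext m
    simp [imSmul, h.smul_smul_self, imUnit_mul_self, h.neg_smul, h.one_smul]
  anticomm l n hln := by
    ext m
    have hsum := h.smul_smul_add (imUnit l) (imUnit n) m
    rw [imUnit_mul_add_eq_zero hln] at hsum
    exact eq_neg_of_add_eq_zero_left (hsum.trans (h.lsmul.map_zero₂ m))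

theorem isOMod_conjSmul (h : IsOMod sm) : IsOMod (conjSmul sm) where
  smul_add p := h.smul_add (conj p)
  add_smul p q m := by simp only [conjSmul, conj_add, h.add_smul]
  real_smul r p m := by simp only [conjSmul, Octo.conj_smul, h.real_smul]
  smul_real r p := h.smul_real r (conj p)
  one_smul m := by simp only [conjSmul, conj_one, h.one_smul]
  alt p q m := by
    rw [neg_sub, sub_eq_sub_iff_add_eq_add]
    simp only [conjSmul, Octo.conj_mul]
    rw [← h.add_smul, ← h.smul_smul_add, add_comm]

theorem ofQuat_smul_ell_smul (h : IsOMod sm) (q : ℍ[ℝ]) (m : M) :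
    sm (ofQuat q) (sm ell m) = sm ell (sm (ofQuat (star q)) m) := by
  have hanti : ofQuat q * ell + ell * ofQuat q = (2 * q.re) • ell := by
    rw [ell_mul_ofQuat, ofQuat_star, sub_mul, add_sub_cancel, smul_mul_assoc, one_mul]
  have hsum := h.smul_smul_add (ofQuat q) ell m
  rw [hanti, h.real_smul, ← eq_sub_iff_add_eq] at hsum
  rw [hsum, ofQuat_star, h.sub_smul, h.real_smul, h.one_smul, ← h.smul_real]
  exact (map_sub (h.lsmul ell) _ _).symm

theorem mem_assocSet_of_associator_ofQuat_eq_zero (h : IsOMod sm) {a : M}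
    (hquat : ∀ p q, h.associator a (ofQuat p) (ofQuat q) = 0)
    (hell : ∀ p, h.associator a (ofQuat p) ell = 0) : a ∈ assocSet sm := by
  have smul_mul_ofQuat (p q) : sm (ofQuat p) (sm (ofQuat q) a) = sm (ofQuat (p * q)) a := by
    rw [h.associator_eq_zero_iff.mp (hquat p q), ofQuat_mul]
  have smul_mul_ell (p) : sm (ofQuat p * ell) a = sm ell (sm (ofQuat (star p)) a) := by
    rw [← h.associator_eq_zero_iff.mp (hell p), h.ofQuat_smul_ell_smul]
  have hquat_ell (p q) : h.associator a (ofQuat p) (ofQuat q * ell) = 0 := by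
    rw [associator_apply, ofQuat_mul_ofQuat_mul_ell, smul_mul_ell, smul_mul_ell,
      h.ofQuat_smul_ell_smul, smul_mul_ofQuat, star_mul, sub_self]
  have hell_quat (p q) : h.associator a (ofQuat p * ell) (ofQuat q) = 0 := by
    rw [associator_swap, hquat_ell, neg_zero]
  have hell_ell (p q) : h.associator a (ofQuat p * ell) (ofQuat q * ell) = 0 := by
    have hanti : ofQuat p * ell * ell + ell * (ofQuat p * ell) = -((2 * p.re) • (1 : Octo)) := by
      rw [ofQuat_mul_ell_mul_ell, ell_mul_ofQuat_mul_ell, ofQuat_star]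
      abel
    have hstar : ofQuat (star q * star p) = (2 * p.re) • ofQuat (star q) - ofQuat (star q * p) := by
      rw [ofQuat_mul, ofQuat_star p, mul_sub, mul_smul_comm, mul_one, ofQuat_mul]
    have hflip : sm (ofQuat p * ell) (sm (ofQuat (star q)) a)
        = sm ell (sm (ofQuat (star q * star p)) a) := by
      rw [h.associator_eq_zero_iff.mp (hell_quat p _), ofQuat_mul_ell_mul_ofQuat, smul_mul_ell,
        star_star, star_mul]
    have hsum := h.smul_smul_add (ofQuat p * ell) ell (sm (ofQuat (star q)) a)
    rw [hanti, hflip, h.smul_smul_self, ell_mul_ell, hstar, ← eq_sub_iff_add_eq] at hsum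
    rw [associator_apply, smul_mul_ell q, hsum, ofQuat_mul_ell_mul_ofQuat_mul_ell]
    simp only [h.neg_smul, h.sub_smul, h.real_smul, h.one_smul]
    abel
  intro p q
  change h.associator a p q = 0
  rw [eq_ofQuat_add_ofQuat_mul_ell p, eq_ofQuat_add_ofQuat_mul_ell q]
  simp only [map_add, LinearMap.add_apply, hquat, hquat_ell, hell_quat, hell_ell, add_zero]

theorem associator_imUnit_eq_zero (h : IsOMod sm) {a : M} {i j k : Fin 7}
    (hijk : imUnit i * imUnit j = imUnit k) (hsign : commSign [i, j] [k] = 1)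
    (ha : ([i, j, k].map h.imSmul).prod a = -a) : h.associator a (imUnit i) (imUnit j) = 0 := by
  have hk : sm (imUnit k) (sm (imUnit i) (sm (imUnit j) a)) = -a := by
    rw [← ha]
    exact (LinearMap.congr_fun (h.isCliffordFamily_imSmul.prod_append_comm hsign) a).symm
  rw [h.associator_eq_zero_iff, hijk]
  calc sm (imUnit i) (sm (imUnit j) a)
      = -sm (imUnit k) (sm (imUnit k) (sm (imUnit i) (sm (imUnit j) a))) := by
        rw [h.smul_smul_self, imUnit_mul_self, h.neg_smul, h.one_smul, neg_neg]
    _ = sm (imUnit k) a := by rw [hk, h.smul_neg, neg_neg]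

theorem mem_assocSet_of_mem_negEigenspace (h : IsOMod sm) {a : M}
    (ha : a ∈ negEigenspace h.imSmul fanoLines) : a ∈ assocSet sm := by
  have hline := mem_negEigenspace.mp ha
  have hrot {i j k : Fin 7} (hsign : commSign [i] [j, k] = 1)
      (hijk : ([i, j, k].map h.imSmul).prod a = -a) : ([j, k, i].map h.imSmul).prod a = -a :=
    h.isCliffordFamily_imSmul.prod_append_comm hsign ▸ hijk
  have h012 := hline [0, 1, 2] (by decide)
  have h120 := hrot (by decide) h012
  have h201 := hrot (by decide) h120
  have h01 := h.associator_imUnit_eq_zero imUnit_zero_mul_one (by decide) h012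
  have h12 := h.associator_imUnit_eq_zero imUnit_one_mul_two (by decide) h120
  have h20 := h.associator_imUnit_eq_zero imUnit_two_mul_zero (by decide) h201
  have h03 := h.associator_imUnit_eq_zero imUnit_zero_mul_three (by decide)
    (hline [0, 3, 4] (by decide))
  have h13 := h.associator_imUnit_eq_zero imUnit_one_mul_three (by decide)
    (hline [1, 3, 5] (by decide))
  have h23 := h.associator_imUnit_eq_zero imUnit_two_mul_three (by decide)
    (hline [2, 3, 6] (by decide))
  refine h.mem_assocSet_of_associator_ofQuat_eq_zero (fun p q => ?_) fun p => ?_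
  · rw [ofQuat_eq_sum_imUnit p, ofQuat_eq_sum_imUnit q]
    simp [h01, h12, h20, associator_self, associator_one_left, associator_one_right,
      h.associator_swap a (imUnit 1) (imUnit 0), h.associator_swap a (imUnit 2) (imUnit 1),
      h.associator_swap a (imUnit 0) (imUnit 2)]
  · rw [ofQuat_eq_sum_imUnit p, ← imUnit_three]
    simp [h03, h13, h23, associator_one_left]

theorem mem_conjAssocSet_of_fixed (h : IsOMod sm) {a : M}
    (ha : ∀ v ∈ fanoLines, (v.map h.imSmul).prod a = a) : a ∈ conjAssocSet sm := by
  have hneg : h.isOMod_conjSmul.imSmul = Neg.neg ∘ h.imSmul := by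
    ext l m
    simp [imSmul, conjSmul, conj_imUnit, h.neg_smul]
  have hlen : ∀ v ∈ fanoLines, v.length = 3 := by decide
  rw [mem_conjAssocSet_iff]
  refine h.isOMod_conjSmul.mem_assocSet_of_mem_negEigenspace (mem_negEigenspace.mpr fun v hv => ?_)
  rw [hneg, ← List.map_map, List.prod_map_neg, List.length_map, hlen v hv,
    Odd.neg_one_pow (by decide)]
  simp [ha v hv]

theorem smul_mem_assocSpan (h : IsOMod sm) (p : Octo) {m : M} (hm : m ∈ assocSpan sm) :
    sm p m ∈ assocSpan sm := by
  suffices hle : assocSpan sm ≤ (assocSpan sm).comap (h.lsmul p) from hle hm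
  refine Submodule.span_le.mpr ?_
  rintro _ ⟨q, a, ha | ha, rfl⟩
  · exact Submodule.subset_span ⟨p * q, a, Or.inl ha, sub_eq_zero.mp (ha p q)⟩
  · exact Submodule.subset_span ⟨q * p, a, Or.inr ha, ha q p⟩

theorem comap_imSmul_assocSpan_le (h : IsOMod sm) (l : Fin 7) :
    (assocSpan sm).comap (h.imSmul l) ≤ assocSpan sm := by
  intro m hm
  have hmm : h.imSmul l (h.imSmul l m) = -m :=
    LinearMap.congr_fun (h.isCliffordFamily_imSmul.mul_self l) m
  rw [← neg_mem_iff, ← hmm]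
  exact h.smul_mem_assocSpan _ hm

theorem negEigenspace_tail_le_assocSpan (h : IsOMod sm) :
    negEigenspace h.imSmul fanoLines.tail ≤ assocSpan sm := by
  have hJ := h.isCliffordFamily_imSmul
  have hsq : ([2, 3, 6].map h.imSmul).prod * ([2, 3, 6].map h.imSmul).prod = 1 := 
    hJ.prod_mul_self_eq_one (by decide)
  have hinv := hJ.negEigenspace_mem_invtSubmodule
    (L := fanoLines.tail) (w := [2, 3, 6]) (by decide)
  refine le_of_inf_eigenspace_le hsq hinv ?_ ?_
  · rintro m ⟨hm, hm236⟩
    have hfix : ∀ v ∈ fanoLines, (v.map h.imSmul).prod (h.imSmul 6 m) = h.imSmul 6 m := by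
      refine List.forall_mem_cons.mpr ⟨?_, fun v hv => ?_⟩
      · have hcomm := LinearMap.congr_fun
          (hJ.commute_prod (v := [2, 3, 6]) (w := [6]) (by decide)).eq m
        have hm236 : h.imSmul 2 (h.imSmul 3 (h.imSmul 6 m)) = m := by simpa using hm236
        simpa [hm236] using hcomm
      · have hsign : ∀ v ∈ fanoLines.tail, commSign v [6] = -1 := by decide
        have hanti := LinearMap.congr_fun (hJ.anticomm_prod (hsign v hv)) m
        simpa [mem_negEigenspace.mp hm v hv] using hanti
    exact h.comap_imSmul_assocSpan_le 6 <| Submodule.subset_span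
      ⟨1, h.imSmul 6 m, Or.inr (h.mem_conjAssocSet_of_fixed hfix), h.one_smul _⟩
  · rintro m ⟨hm, hm236⟩
    refine Submodule.subset_span ⟨1, m, Or.inl ?_, h.one_smul m⟩
    refine h.mem_assocSet_of_mem_negEigenspace (mem_negEigenspace.mpr ?_)
    exact List.forall_mem_cons.mpr ⟨by simpa using hm236, mem_negEigenspace.mp hm⟩

theorem assocSpan_eq_top (h : IsOMod sm) : assocSpan sm = ⊤ := by
  have descent {L : List (List (Fin 7))} {v : List (Fin 7)} (i : Fin 7) :=
    h.isCliffordFamily_imSmul.negEigenspace_le_of_cons (L := L) (v := v)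
      (h.comap_imSmul_assocSpan_le i)
  have hnil : negEigenspace h.imSmul [] ≤ assocSpan sm :=
    descent (v := [0, 1, 2]) 3 (by decide) (by decide) (by decide) <|
    descent (v := [0, 3, 4]) 1 (by decide) (by decide) (by decide) <|
    descent (v := [1, 3, 5]) 0 (by decide) (by decide) (by decide)
      h.negEigenspace_tail_le_assocSpan
  refine eq_top_iff.mpr fun m _ => hnil (mem_negEigenspace.mpr (by simp))

end IsOMod

section Cyclic

open Octo

variable {M : Type*} [AddCommGroup M] [Module ℝ M] {sm : Octo → M → M} {x : M}

theorem genSubmodule_le {K : Submodule ℝ M} (hK : ∀ (p : Octo), ∀ y ∈ K, sm p y ∈ K)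
    (hx : x ∈ K) : genSubmodule sm x ≤ K := fun _ hy =>
  Set.mem_sInter.mp hy K ⟨⟨K.zero_mem, K.add_mem, fun r _ => K.smul_mem r, fun p _ => hK p _⟩, hx⟩

namespace IsOMod

theorem range_le_genSubmodule (h : IsOMod sm) : LinearMap.range (h.lsmul.flip x) ≤
    genSubmodule sm x := by
  rintro _ ⟨p, rfl⟩
  exact Set.mem_sInter.mpr fun K hK => hK.1.osmul_mem p hK.2

theorem finrank_range_eq_eight (h : IsOMod sm) (hx : x ≠ 0) :
    Module.finrank ℝ (LinearMap.range (h.lsmul.flip x)) = 8 := by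
  rw [LinearMap.finrank_range_of_inj (h.injective_smul_right hx), finrank_eq_eight]

theorem isOCyclic_iff_range_eq (h : IsOMod sm) :
    IsOCyclic sm x ↔ LinearMap.range (h.lsmul.flip x) = genSubmodule sm x := by
  have hrange : (LinearMap.range (h.lsmul.flip x) : Set M) = {y | ∃ p, y = sm p x} := by
    ext y
    exact exists_congr fun p => eq_comm
  rw [IsOCyclic, ← hrange, eq_comm]
  exact SetLike.coe_set_eq (q := genSubmodule sm x)

theorem isOCyclic_iff_finrank_eq_eight (h : IsOMod sm) (hx : x ≠ 0) :
    IsOCyclic sm x ↔ Module.finrank ℝ (genSubmodule sm x) = 8 := by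
  rw [h.isOCyclic_iff_range_eq]
  refine ⟨fun heq => heq ▸ h.finrank_range_eq_eight hx, fun hdim => ?_⟩
  have : Module.Finite ℝ (genSubmodule sm x) := Module.finite_of_finrank_pos (by omega)
  exact Submodule.eq_of_le_of_finrank_eq h.range_le_genSubmodule
    ((h.finrank_range_eq_eight hx).trans hdim.symm)

theorem smul_mem_range_of_mem (h : IsOMod sm) {a : M} (ha : a ∈ assocSet sm ∪ conjAssocSet sm)
    (p : Octo) {y : M} (hy : y ∈ LinearMap.range (h.lsmul.flip a)) :
    sm p y ∈ LinearMap.range (h.lsmul.flip a) := by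
  obtain ⟨q, rfl⟩ := hy
  rcases ha with ha | ha
  · exact ⟨p * q, sub_eq_zero.mp (ha p q)⟩
  · exact ⟨q * p, ha q p⟩

theorem isOCyclic_of_mem_range (h : IsOMod sm) {a : M} (ha : a ∈ assocSet sm ∪ conjAssocSet sm)
    (hx : x ≠ 0) (hxa : x ∈ LinearMap.range (h.lsmul.flip a)) : IsOCyclic sm x := by
  have hgen : genSubmodule sm x ≤ LinearMap.range (h.lsmul.flip a) :=
    genSubmodule_le (fun p _ => h.smul_mem_range_of_mem ha p) hxa
  have hdim : Module.finrank ℝ (LinearMap.range (h.lsmul.flip a))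
      ≤ Module.finrank ℝ (LinearMap.range (h.lsmul.flip x)) := by
    rw [h.finrank_range_eq_eight hx, ← finrank_eq_eight]
    exact LinearMap.finrank_range_le _
  have hrange := Submodule.eq_of_le_of_finrank_le (h.range_le_genSubmodule.trans hgen) hdim
  exact h.isOCyclic_iff_range_eq.mpr
    (le_antisymm h.range_le_genSubmodule (hgen.trans_eq hrange.symm))

theorem span_isOCyclic_eq_top (h : IsOMod sm) : Submodule.span ℝ {m : M | IsOCyclic sm m} = ⊤ := by
  rw [← top_le_iff, ← h.assocSpan_eq_top, assocSpan, Submodule.span_le]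
  rintro _ ⟨p, a, ha, rfl⟩
  by_cases hpa : sm p a = 0
  · exact hpa ▸ Submodule.zero_mem _
  · exact Submodule.subset_span (h.isOCyclic_of_mem_range ha hpa ⟨p, rfl⟩)

theorem oIso_oSmul_of_mem_assocSet (h : IsOMod sm) (hdim : Module.finrank ℝ M = 8) {a : M}
    (ha : a ∈ assocSet sm) (ha0 : a ≠ 0) : OIso sm oSmul := by
  have : Module.Finite ℝ M := Module.finite_of_finrank_pos (by omega)
  let f : Octo ≃ₗ[ℝ] M := LinearEquiv.ofInjectiveOfFinrankEq (h.lsmul.flip a)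
    (h.injective_smul_right ha0) (finrank_eq_eight.trans hdim.symm)
  refine ⟨f.symm, ⟨f.symm.toLinearMap.isLinear, fun p m => ?_⟩, f.symm.bijective⟩
  have hfm : sm (f.symm m) a = m := f.apply_symm_apply m
  refine f.symm_apply_eq.mpr ?_
  calc sm p m = sm p (sm (f.symm m) a) := by rw [hfm]
    _ = sm (p * f.symm m) a := (sub_eq_zero.mp (ha p (f.symm m))).symm

theorem oIso_of_finrank_eq_eight (h : IsOMod sm) (hdim : Module.finrank ℝ M = 8) :
    OIso sm oSmul ∨ OIso sm oBarSmul := by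
  have : Nontrivial M := Module.nontrivial_of_finrank_pos (R := ℝ) (by omega)
  obtain ⟨a, ha, ha0⟩ : ∃ a ∈ assocSet sm ∪ conjAssocSet sm, a ≠ 0 := by
    by_contra! hzero
    refine top_ne_bot (α := Submodule ℝ M) ?_
    rw [← h.assocSpan_eq_top, assocSpan, Submodule.span_eq_bot]
    rintro _ ⟨p, a, ha, rfl⟩
    rw [hzero a ha]
    exact map_zero (h.lsmul p)
  rcases ha with ha | ha
  · exact Or.inl (h.oIso_oSmul_of_mem_assocSet hdim ha ha0)
  · obtain ⟨f, ⟨hlin, hf⟩, hbij⟩ :=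
      h.isOMod_conjSmul.oIso_oSmul_of_mem_assocSet hdim (mem_conjAssocSet_iff.mp ha) ha0
    refine Or.inr ⟨f, ⟨hlin, fun p m => ?_⟩, hbij⟩
    calc f (sm p m) = f (conjSmul sm (conj p) m) := by rw [conjSmul, conj_conj]
      _ = conj p * f m := hf (conj p) m

theorem isOMod_genSmul (h : IsOMod sm) : IsOMod (genSmul sm x) where
  smul_add p m n := Subtype.ext (h.smul_add p m n)
  add_smul p q m := Subtype.ext (h.add_smul p q m)
  real_smul r p m := Subtype.ext (h.real_smul r p m)
  smul_real r p m := Subtype.ext (h.smul_real r p m)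
  one_smul m := Subtype.ext (h.one_smul m)
  alt p q m := Subtype.ext (h.alt p q m)

end IsOMod

theorem OIso.finrank_eq {N : Type*} [AddCommGroup N] [Module ℝ N] {sm' : Octo → N → N}
    (hiso : OIso sm sm') : Module.finrank ℝ M = Module.finrank ℝ N := by
  obtain ⟨f, ⟨hlin, _⟩, hbij⟩ := hiso
  exact (LinearEquiv.ofBijective (hlin.mk' f) hbij).finrank_eq

end Cyclic

/-- For `x ≠ 0` in a left 𝕆-module: `x` is cyclic ↔ `dim_ℝ ⟨x⟩_𝕆 = 8` ↔
`⟨x⟩_𝕆 ≅ 𝕆` or `𝕆̄`; moreover `M = Span_ℝ 𝒞(M)`. -/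
theorem stmt19 {M : Type*} [AddCommGroup M] [Module ℝ M]
    (sm : Octo → M → M) (h : IsOMod sm) (x : M) (hx : x ≠ 0) :
    ((IsOCyclic sm x ↔ Module.finrank ℝ (genSubmodule sm x) = 8) ∧
     (IsOCyclic sm x ↔ (OIso (genSmul sm x) oSmul ∨ OIso (genSmul sm x) oBarSmul))) ∧
    Submodule.span ℝ {m : M | IsOCyclic sm m} = ⊤ := by
  have hdim := h.isOCyclic_iff_finrank_eq_eight hx
  refine ⟨⟨hdim, hdim.trans ⟨h.isOMod_genSmul.oIso_of_finrank_eq_eight, ?_⟩⟩,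
    h.span_isOCyclic_eq_top⟩
  rintro (hiso | hiso) <;> exact hiso.finrank_eq.trans Octo.finrank_eq_eight
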